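/- arXiv:2203.05261 — 2 statements merged into one kernel-verified Lean document; each statement's English description precedes it below -/
import Mathlib

section
/- Let d ≥ 1, let f : ℝ^d → ℂ be an affine function and let v_1, …, v_{d+1} ∈ ℝ^d be affinely independent with d-simplex s = conv(v_1, …, v_{d+1}). Then (vol(s) / ((d+2)(d+1))) · Σ_{k=1}^{d+1} |f(v_k)|² ≤ ∫_s |f(x)|² dx ≤ (vol(s) / (d+1)) · Σ_{k=1}^{d+1} |f(v_k)|². -/
open MeasureTheory

/-!
Bisecting a simplex at the midpoint of the edge joining its vertices `i` and `j` gives two halves,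
each the image of the whole simplex under an affine map of Jacobian `1 / 2` that acts on barycentric
coordinates by `(λᵢ, λⱼ) ↦ (λᵢ + λⱼ / 2, λⱼ / 2)` or the same with `i` and `j` exchanged.
Integrating `λᵢ ^ 2` over the two halves yields a linear relation between the second moments
`Mᵢⱼ = ∫ λᵢ λⱼ`, and these relations alone force `Mᵢⱼ = m (1 + δᵢⱼ)` for a single constant `m`;
summing over all `i` and `j` identifies `m` through `∑ λᵢ = 1`. Hence for affine `f = ∑ λₖ f(vₖ)`
the integral of `‖f‖²` equals `m (‖∑ f(vₖ)‖² + ∑ ‖f(vₖ)‖²)`, and the two bounds are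
`0 ≤ ‖∑ f(vₖ)‖² ≤ (d + 1) ∑ ‖f(vₖ)‖²`.
-/

open Module
open scoped RealInnerProductSpace

theorem norm_sum_sq_le_card_mul_sum_norm_sq {ι F : Type*} [SeminormedAddCommGroup F]
    (s : Finset ι) (u : ι → F) : ‖∑ k ∈ s, u k‖ ^ 2 ≤ s.card * ∑ k ∈ s, ‖u k‖ ^ 2 :=
  (pow_le_pow_left₀ (norm_nonneg _) (norm_sum_le s u) 2).trans sq_sum_le_card_mul_sum_sq

theorem norm_sum_sq_eq_sum_sum_inner {ι F : Type*} [SeminormedAddCommGroup F]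
    [InnerProductSpace ℝ F] (s : Finset ι) (u : ι → F) :
    ‖∑ k ∈ s, u k‖ ^ 2 = ∑ k ∈ s, ∑ l ∈ s, ⟪u k, u l⟫ := by
  rw [← real_inner_self_eq_norm_sq, sum_inner]
  simp only [inner_sum]

section AffineAlgebra

variable {ι k V W : Type*} [Fintype ι] [AddCommGroup V] [AddCommGroup W]

theorem affineMap_apply_eq_sum_coord_smul [Ring k] [Module k V] [Module k W]
    (b : AffineBasis ι k V) (f : V →ᵃ[k] W) (x : V) : f x = ∑ i, b.coord i x • f (b i) := by
  have hx := b.sum_coord_apply_eq_one x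
  conv_lhs => rw [← b.affineCombination_coord_eq_self x, Finset.map_affineCombination _ _ _ hx,
    Finset.affineCombination_eq_linear_combination _ _ _ hx]
  rfl

theorem exists_affineMap_coe_eq [CommRing k] [Module k W] {f : (ι → k) → W} {a : ι → W} {c : W}
    (hf : ∀ x, f x = ∑ i, x i • a i + c) : ∃ g : (ι → k) →ᵃ[k] W, ⇑g = f := by
  refine ⟨(Fintype.linearCombination k a).toAffineMap + AffineMap.const k (ι → k) c, ?_⟩
  ext x
  simp [hf, Fintype.linearCombination_apply]

theorem exists_affineBasis_coe_eq [DivisionRing k] [Module k V] [FiniteDimensional k V] {v : ι → V}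
    (hv : AffineIndependent k v) (hcard : Fintype.card ι = finrank k V + 1) :
    ∃ b : AffineBasis ι k V, ⇑b = v :=
  ⟨⟨v, hv, hv.affineSpan_eq_top_iff_card_eq_finrank_add_one.2 hcard⟩, rfl⟩

end AffineAlgebra

section AffineMeasure

variable {E F : Type*} [NormedAddCommGroup E] [NormedSpace ℝ E] [FiniteDimensional ℝ E]
  [MeasurableSpace E] [BorelSpace E] (μ : Measure E) [μ.IsAddHaarMeasure]

theorem setIntegral_image_affineMap [NormedAddCommGroup F] [NormedSpace ℝ F] {T : E →ᵃ[ℝ] E}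
    (hT : Function.Injective T) {s : Set E} (hs : MeasurableSet s) (g : E → F) :
    ∫ x in T '' s, g x ∂μ = |T.linear.det| • ∫ x in s, g (T x) ∂μ := by
  let T' : E →ᴬ[ℝ] E := ⟨T, T.continuous_of_finiteDimensional⟩
  have hderiv : ∀ x ∈ s, HasFDerivWithinAt T T'.contLinear s x := fun _ _ => T'.hasFDerivWithinAt
  rw [integral_image_eq_integral_abs_det_fderiv_smul μ hs hderiv hT.injOn, integral_smul]
  rfl

theorem measure_setOf_affineMap_eq_zero [AddCommGroup F] [Module ℝ F] {f g : E →ᵃ[ℝ] F}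
    (hfg : f ≠ g) : μ {x | f x = g x} = 0 := by
  let A : AffineSubspace ℝ E := (AffineSubspace.mk' (0 : F) ⊥).comap (f - g)
  have hA : (A : Set E) = {x | f x = g x} := by
    ext x
    simp [A, sub_eq_zero]
  rw [← hA]
  refine μ.addHaar_affineSubspace A fun htop => hfg ?_
  ext x
  change x ∈ {x | f x = g x}
  simp [← hA, htop]

end AffineMeasure

section EdgeBisection

variable {ι E : Type*} [AddCommGroup E] [Module ℝ E] (b : AffineBasis ι ℝ E) {i j k : ι}

/-- The affine map that moves the vertex `b j` to the midpoint of the edge from `b i` to `b j` and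
fixes all other vertices. It carries the simplex spanned by `b` onto the half that contains `b i`
when the simplex is bisected at that midpoint. -/
noncomputable def edgeBisection (i j : ι) : E →ᵃ[ℝ] E :=
  AffineMap.id ℝ E +
    (LinearMap.toSpanSingleton ℝ E ((1 / 2 : ℝ) • (b i - b j))).toAffineMap.comp (b.coord j)

theorem linear_edgeBisection (i j : ι) : (edgeBisection b i j).linear =
    LinearMap.transvection (b.coord j).linear ((1 / 2 : ℝ) • (b i - b j)) :=
  rfl

theorem linear_coord_sub (i j k : ι) :
    (b.coord k).linear (b i - b j) = b.coord k (b i) - b.coord k (b j) :=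
  (b.coord k).linearMap_vsub (b i) (b j)

theorem det_linear_edgeBisection [Finite ι] (hij : i ≠ j) :
    (edgeBisection b i j).linear.det = 1 / 2 := by
  have := b.finiteDimensional
  rw [linear_edgeBisection, LinearMap.transvection.det, map_smul, linear_coord_sub,
    b.coord_apply_eq, b.coord_apply_ne hij.symm]
  norm_num

theorem edgeBisection_bijective [Finite ι] (hij : i ≠ j) :
    Function.Bijective (edgeBisection b i j) := by
  have := b.finiteDimensional
  have hdet : (edgeBisection b i j).linear.det ≠ 0 := by simp [det_linear_edgeBisection b hij]
  exact (edgeBisection b i j).linear_bijective_iff.1 (LinearMap.equivOfDetNeZero _ hdet).bijective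

theorem coord_edgeBisection (i j k : ι) (x : E) : b.coord k (edgeBisection b i j x) =
    b.coord k x + b.coord j x / 2 * (b.coord k (b i) - b.coord k (b j)) := by
  have hx : edgeBisection b i j x = (b.coord j x / 2) • (b i - b j) +ᵥ x := by
    simp [edgeBisection, smul_smul, div_eq_mul_inv, add_comm]
  rw [hx, AffineMap.map_vadd, map_smul, linear_coord_sub, vadd_eq_add, smul_eq_mul, add_comm]

theorem coord_left_edgeBisection (hij : i ≠ j) (x : E) :
    b.coord i (edgeBisection b i j x) = b.coord i x + b.coord j x / 2 := by
  simp [coord_edgeBisection, hij]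

theorem coord_right_edgeBisection (hij : i ≠ j) (x : E) :
    b.coord j (edgeBisection b i j x) = b.coord j x / 2 := by
  rw [coord_edgeBisection, b.coord_apply_ne hij.symm, b.coord_apply_eq]
  ring

theorem coord_edgeBisection_of_ne (hki : k ≠ i) (hkj : k ≠ j) (x : E) :
    b.coord k (edgeBisection b i j x) = b.coord k x := by
  simp [coord_edgeBisection, hki, hkj]

theorem edgeBisection_image_convexHull [Finite ι] (hij : i ≠ j) :
    edgeBisection b i j '' convexHull ℝ (Set.range b) =
      convexHull ℝ (Set.range b) ∩ {x | b.coord j x ≤ b.coord i x} := by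
  rw [← Set.image_preimage_eq (convexHull ℝ (Set.range b) ∩ _) (edgeBisection_bijective b hij).2]
  congr 1
  ext x
  simp only [b.convexHull_eq_nonneg_coord, Set.mem_preimage, Set.mem_inter_iff, Set.mem_ofPred_eq,
    coord_left_edgeBisection b hij, coord_right_edgeBisection b hij]
  constructor
  · refine fun hx => ⟨fun k => ?_, by linarith [hx i]⟩
    rcases eq_or_ne k i with rfl | hki
    · rw [coord_left_edgeBisection b hij]
      linarith [hx k, hx j]
    rcases eq_or_ne k j with rfl | hkj
    · rw [coord_right_edgeBisection b hij]
      linarith [hx k]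
    · rw [coord_edgeBisection_of_ne b hki hkj]
      exact hx k
  · rintro ⟨hx, hle⟩ k
    have hk := hx k
    rcases eq_or_ne k i with rfl | hki
    · linarith
    rcases eq_or_ne k j with rfl | hkj
    · rw [coord_right_edgeBisection b hij] at hk
      linarith
    · rwa [coord_edgeBisection_of_ne b hki hkj] at hk

end EdgeBisection

section Bisection

variable {ι E F : Type*} [Finite ι] [NormedAddCommGroup E] [NormedSpace ℝ E]
  [MeasurableSpace E] [BorelSpace E] (μ : Measure E) [μ.IsAddHaarMeasure]
  [NormedAddCommGroup F] [NormedSpace ℝ F] (b : AffineBasis ι ℝ E) {i j : ι}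

theorem setIntegral_convexHull_inter_coord_le (hij : i ≠ j) (g : E → F) :
    ∫ x in convexHull ℝ (Set.range b) ∩ {x | b.coord j x ≤ b.coord i x}, g x ∂μ =
      (1 / 2 : ℝ) • ∫ x in convexHull ℝ (Set.range b), g (edgeBisection b i j x) ∂μ := by
  have := b.finiteDimensional
  have hmeas := ((Set.finite_range b).isCompact_convexHull ℝ).measurableSet
  rw [← edgeBisection_image_convexHull b hij,
    setIntegral_image_affineMap μ (edgeBisection_bijective b hij).1 hmeas,
    det_linear_edgeBisection b hij, abs_of_pos one_half_pos]

theorem setIntegral_convexHull_eq_add_edgeBisection (hij : i ≠ j) {g : E → F}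
    (hg : IntegrableOn g (convexHull ℝ (Set.range b)) μ) :
    ∫ x in convexHull ℝ (Set.range b), g x ∂μ =
      (1 / 2 : ℝ) • (∫ x in convexHull ℝ (Set.range b), g (edgeBisection b i j x) ∂μ) +
        (1 / 2 : ℝ) • ∫ x in convexHull ℝ (Set.range b), g (edgeBisection b j i x) ∂μ := by
  have := b.finiteDimensional
  set S := convexHull ℝ (Set.range b)
  have hcover : S ∩ {x | b.coord j x ≤ b.coord i x} ∪ S ∩ {x | b.coord i x ≤ b.coord j x} = S := by
    rw [← Set.inter_union_distrib_left, Set.inter_eq_left]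
    exact fun x _ => le_total (b.coord j x) (b.coord i x)
  have hcoord : b.coord j ≠ b.coord i := fun h => by
    simpa [hij.symm] using congrArg (· (b i)) h
  have hdisj : AEDisjoint μ (S ∩ {x | b.coord j x ≤ b.coord i x})
      (S ∩ {x | b.coord i x ≤ b.coord j x}) :=
    measure_mono_null (fun _ hx => le_antisymm hx.1.2 hx.2.2)
      (measure_setOf_affineMap_eq_zero μ hcoord)
  have hmeas : MeasurableSet (S ∩ {x | b.coord i x ≤ b.coord j x}) :=
    ((Set.finite_range b).isCompact_convexHull ℝ).measurableSet.inter <| measurableSet_le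
      (continuous_barycentric_coord b i).measurable (continuous_barycentric_coord b j).measurable
  rw [← setIntegral_convexHull_inter_coord_le μ b hij,
    ← setIntegral_convexHull_inter_coord_le μ b hij.symm,
    ← setIntegral_union₀ hdisj hmeas.nullMeasurableSet (hg.mono_set Set.inter_subset_left)
      (hg.mono_set Set.inter_subset_left), hcover]

end Bisection

section CoordMoment

variable {ι E F : Type*} [NormedAddCommGroup E] [NormedSpace ℝ E] [MeasurableSpace E]
  (μ : Measure E) (b : AffineBasis ι ℝ E) {i j : ι}

/-- The second moment `∫ λᵢ λⱼ dμ` of the barycentric coordinates over the simplex spanned by `b`,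
not normalized by the volume of the simplex. -/
noncomputable def coordMoment (i j : ι) : ℝ :=
  ∫ x in convexHull ℝ (Set.range b), b.coord i x * b.coord j x ∂μ

theorem coordMoment_comm (i j : ι) : coordMoment μ b i j = coordMoment μ b j i := by
  simp only [coordMoment, mul_comm]

variable [BorelSpace E] [μ.IsAddHaarMeasure]

theorem integrableOn_coord_mul_coord [Finite ι] (i j : ι) :
    IntegrableOn (fun x => b.coord i x * b.coord j x) (convexHull ℝ (Set.range b)) μ := by
  have := b.finiteDimensional
  exact ((continuous_barycentric_coord b i).mul (continuous_barycentric_coord b j)).continuousOn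
    |>.integrableOn_compact ((Set.finite_range b).isCompact_convexHull ℝ)

theorem setIntegral_mul_coord_add_mul_coord_sq [Finite ι] (i j : ι) (p q : ℝ) :
    ∫ x in convexHull ℝ (Set.range b), (p * b.coord i x + q * b.coord j x) ^ 2 ∂μ =
      p ^ 2 * coordMoment μ b i i + 2 * p * q * coordMoment μ b i j +
        q ^ 2 * coordMoment μ b j j := by
  have hint := integrableOn_coord_mul_coord μ b
  have hii := (hint i i).const_mul (p ^ 2)
  have hij := (hint i j).const_mul (2 * p * q)
  have hjj := (hint j j).const_mul (q ^ 2)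
  simp only [coordMoment, ← integral_const_mul]
  rw [← integral_add hii hij, ← integral_add (by exact hii.add hij) hjj]
  congr with x
  ring

theorem three_mul_coordMoment_self [Finite ι] (hij : i ≠ j) :
    3 * coordMoment μ b i i = 4 * coordMoment μ b i j + coordMoment μ b j j := by
  set S := convexHull ℝ (Set.range b)
  have hsplit : coordMoment μ b i i =
      1 / 2 * (∫ x in S, (1 * b.coord i x + 1 / 2 * b.coord j x) ^ 2 ∂μ) +
        1 / 2 * ∫ x in S, (1 / 2 * b.coord i x + 0 * b.coord j x) ^ 2 ∂μ := by
    rw [coordMoment, setIntegral_convexHull_eq_add_edgeBisection μ b hij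
      (integrableOn_coord_mul_coord μ b i i)]
    simp only [coord_left_edgeBisection b hij, coord_right_edgeBisection b hij.symm, smul_eq_mul]
    congr 4 with x <;> ring
  rw [setIntegral_mul_coord_add_mul_coord_sq, setIntegral_mul_coord_add_mul_coord_sq] at hsplit
  linarith

theorem coordMoment_self_eq [Finite ι] (i j : ι) : coordMoment μ b i i = coordMoment μ b j j := by
  rcases eq_or_ne i j with rfl | hij
  · rfl
  · linarith [three_mul_coordMoment_self μ b hij, three_mul_coordMoment_self μ b hij.symm,
      coordMoment_comm μ b i j]

theorem two_mul_coordMoment_of_ne [Finite ι] (hij : i ≠ j) :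
    2 * coordMoment μ b i j = coordMoment μ b i i := by
  linarith [three_mul_coordMoment_self μ b hij, coordMoment_self_eq μ b i j]

theorem exists_coordMoment_eq_mul_one_add_ite [Finite ι] [DecidableEq ι] :
    ∃ m : ℝ, ∀ i j, coordMoment μ b i j = m * (1 + if i = j then 1 else 0) := by
  obtain ⟨o⟩ := b.nonempty
  refine ⟨coordMoment μ b o o / 2, fun i j => ?_⟩
  rw [coordMoment_self_eq μ b o i]
  split_ifs with hij
  · rw [hij]
    ring
  · linarith [two_mul_coordMoment_of_ne μ b hij]

variable [Fintype ι]

theorem setIntegral_norm_sq_affineMap_eq_sum_coordMoment [NormedAddCommGroup F]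
    [InnerProductSpace ℝ F] (f : E →ᵃ[ℝ] F) :
    ∫ x in convexHull ℝ (Set.range b), ‖f x‖ ^ 2 ∂μ =
      ∑ k, ∑ l, coordMoment μ b k l * ⟪f (b k), f (b l)⟫ := by
  have hexpand (x : E) :
      ‖f x‖ ^ 2 = ∑ k, ∑ l, b.coord k x * b.coord l x * ⟪f (b k), f (b l)⟫ := by
    rw [affineMap_apply_eq_sum_coord_smul b, norm_sum_sq_eq_sum_sum_inner]
    simp only [real_inner_smul_left, real_inner_smul_right]
    exact Finset.sum_congr rfl fun k _ => Finset.sum_congr rfl fun l _ => by ring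
  have hint (k l : ι) : IntegrableOn (fun x => b.coord k x * b.coord l x * ⟪f (b k), f (b l)⟫)
      (convexHull ℝ (Set.range b)) μ :=
    (integrableOn_coord_mul_coord μ b k l).mul_const _
  simp_rw [hexpand, coordMoment, ← integral_mul_const]
  rw [integral_finsetSum _ fun k _ => integrable_finsetSum _ fun l _ => hint k l]
  simp_rw [integral_finsetSum _ fun l _ => hint _ l]

theorem sum_sum_coordMoment :
    ∑ k, ∑ l, coordMoment μ b k l = μ.real (convexHull ℝ (Set.range b)) := by
  simpa using
    (setIntegral_norm_sq_affineMap_eq_sum_coordMoment μ b (AffineMap.const ℝ E (1 : ℝ))).symm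

theorem coordMoment_eq_measureReal_div_mul [DecidableEq ι] (i j : ι) :
    coordMoment μ b i j = μ.real (convexHull ℝ (Set.range b)) /
      ((Fintype.card ι + 1) * Fintype.card ι) * (1 + if i = j then 1 else 0) := by
  obtain ⟨m, hm⟩ := exists_coordMoment_eq_mul_one_add_ite μ b
  have hvol : μ.real (convexHull ℝ (Set.range b)) =
      m * ((Fintype.card ι + 1) * Fintype.card ι) := by
    simp only [← sum_sum_coordMoment, hm, ← Finset.mul_sum, Finset.sum_add_distrib,
      Finset.sum_ite_eq, Finset.mem_univ, if_true, Finset.sum_const, Finset.card_univ, nsmul_eq_mul]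
    ring
  have hcard : (Fintype.card ι : ℝ) ≠ 0 := have := b.nonempty; by simp
  rw [hm, hvol, mul_div_cancel_right₀]
  positivity

end CoordMoment

section AffineNormSq

variable {ι E F : Type*} [Fintype ι] [NormedAddCommGroup E] [NormedSpace ℝ E] [MeasurableSpace E]
  [BorelSpace E] (μ : Measure E) [μ.IsAddHaarMeasure] [NormedAddCommGroup F] [InnerProductSpace ℝ F]
  (b : AffineBasis ι ℝ E) (f : E →ᵃ[ℝ] F)

theorem setIntegral_norm_sq_affineMap :
    ∫ x in convexHull ℝ (Set.range b), ‖f x‖ ^ 2 ∂μ =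
      μ.real (convexHull ℝ (Set.range b)) / ((Fintype.card ι + 1) * Fintype.card ι) *
        (‖∑ k, f (b k)‖ ^ 2 + ∑ k, ‖f (b k)‖ ^ 2) := by
  classical
  rw [setIntegral_norm_sq_affineMap_eq_sum_coordMoment, norm_sum_sq_eq_sum_sum_inner]
  simp only [coordMoment_eq_measureReal_div_mul, mul_assoc, ← Finset.mul_sum, add_mul, one_mul,
    Finset.sum_add_distrib, ite_mul, zero_mul, Finset.sum_ite_eq, Finset.mem_univ, if_true,
    real_inner_self_eq_norm_sq]

theorem integral_sq_norm_affine_simplex_bounds_general :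
    μ.real (convexHull ℝ (Set.range b)) / ((finrank ℝ E + 2) * (finrank ℝ E + 1)) *
        (∑ k, ‖f (b k)‖ ^ 2) ≤
      ∫ x in convexHull ℝ (Set.range b), ‖f x‖ ^ 2 ∂μ ∧
    ∫ x in convexHull ℝ (Set.range b), ‖f x‖ ^ 2 ∂μ ≤
      μ.real (convexHull ℝ (Set.range b)) / (finrank ℝ E + 1) * (∑ k, ‖f (b k)‖ ^ 2) := by
  have hcard : (Fintype.card ι : ℝ) = finrank ℝ E + 1 := by
    exact_mod_cast b.card_eq_finrank_add_one
  have hsum := norm_sum_sq_le_card_mul_sum_norm_sq Finset.univ fun k => f (b k)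
  rw [Finset.card_univ, hcard] at hsum
  rw [setIntegral_norm_sq_affineMap, hcard, add_assoc _ 1 1, one_add_one_eq_two]
  set d : ℝ := (finrank ℝ E : ℝ)
  set vol := μ.real (convexHull ℝ (Set.range b))
  set S := ∑ k, ‖f (b k)‖ ^ 2
  constructor
  · gcongr
    exact le_add_of_nonneg_left (sq_nonneg _)
  · calc vol / ((d + 2) * (d + 1)) * (‖∑ k, f (b k)‖ ^ 2 + S)
      _ ≤ vol / ((d + 2) * (d + 1)) * ((d + 1) * S + S) := by gcongr
      _ = vol / (d + 1) * S := by
        have hd : 0 ≤ d := Nat.cast_nonneg _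
        field_simp
        ring

end AffineNormSq

/-- two-sided bound for the squared-`L₂` integral of a complex affine function over
a `d`-simplex in terms of its values at the vertices. -/
theorem integral_sq_norm_affine_simplex_bounds (d : ℕ) (hd : 1 ≤ d)
    (a : Fin d → ℂ) (b : ℂ) (f : (Fin d → ℝ) → ℂ)
    (hf : ∀ x, f x = (∑ i, a i * (x i : ℂ)) + b)
    (v : Fin (d + 1) → (Fin d → ℝ)) (hv : AffineIndependent ℝ v) :
    (volume (convexHull ℝ (Set.range v))).toReal / ((d + 2) * (d + 1)) *
        (∑ k, ‖f (v k)‖ ^ 2) ≤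
      ∫ x in convexHull ℝ (Set.range v), ‖f x‖ ^ 2 ∧
    ∫ x in convexHull ℝ (Set.range v), ‖f x‖ ^ 2 ≤
      (volume (convexHull ℝ (Set.range v))).toReal / (d + 1) * (∑ k, ‖f (v k)‖ ^ 2) := by
  obtain ⟨g, rfl⟩ : ∃ g : (Fin d → ℝ) →ᵃ[ℝ] ℂ, ⇑g = f :=
    exists_affineMap_coe_eq (a := a) (c := b) fun x => by simp [hf, mul_comm]
  obtain ⟨B, rfl⟩ := exists_affineBasis_coe_eq hv (by simp)
  simpa [Measure.real] using integral_sq_norm_affine_simplex_bounds_general volume B g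
end

section
/- Let d ≥ 1 and let D : ℝ^d → ℝ be the Cartesian linear box spline. Then Σ_{k ∈ ℤ^d} (∫_{ℝ^d} D(x) D(x − k) dx) · e^{2πi(k_1+⋯+k_d)/(d+1)} = 1/(d+2), where the sum has only finitely many nonzero terms. (This is the value ĝ(ω₀) of the discrete-time Fourier transform of the sampled autocorrelation of D at ω₀ = −(2π/(d+1))·(1,…,1), and it shows that the lower Riesz bound 1/√(d+2) of the shifts of D is attained.) -/
open MeasureTheory

/-- The Cartesian linear box spline on `ℝ^d`:
`D(x) = Σ_{ε ∈ {0,1}^{d+1}} (−1)^{|ε|} max(0, min_{1 ≤ i ≤ d} (x_i − ε_i − ε_{d+1}))`. -/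
noncomputable def boxSplineD (d : ℕ) (x : Fin d → ℝ) : ℝ :=
  ∑ ε : Fin (d + 1) → Fin 2,
    (-1 : ℝ) ^ (∑ i, (ε i : ℕ)) *
      max 0 (⨅ i : Fin d, (x i - ((ε (Fin.castSucc i) : ℕ) : ℝ) - ((ε (Fin.last d) : ℕ) : ℝ)))

/-!
`D` is the density of the push-forward of the unit cube of `ℝ^(d+1)` under `(y, t) ↦ (y i + t)ᵢ`:
`D x = ∫ χ t * ∏ i, χ (x i - t) dt` with `χ` the indicator of `[0, 1)`. Hence its autocorrelation at
`y` is `∫ h u * ∏ i, h (u - y i) du` with `h` the hat function. Summing against `z ^ |k|` over `ℤ^d`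
therefore gives `∫ h u * G u ^ d du`, where `G` interpolates `n ↦ z ^ n` linearly. On `[-1, 1]` this
is an elementary integral, and when `z ^ (d + 1) = 1`, `z ≠ 1`, the halves `u > 0` and `u < 0`
contribute `1 / ((1 - z) * (d + 2))` and `1 / ((1 - z⁻¹) * (d + 2))`, where
`1 / (1 - z) + 1 / (1 - z⁻¹) = 1`.
-/

open Set Function

/-- The right-continuous Heaviside function. -/
noncomputable def unitStep : ℝ → ℝ := (Ici 0).indicator 1

/-- The one-dimensional box function, with the half-open convention that makes it the difference of
two integer translates of `unitStep`. -/
noncomputable def unitBox : ℝ → ℝ := (Ico 0 1).indicator 1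

/-- The hat function, i.e. the centred linear B-spline; it is the autocorrelation of `unitBox`. -/
noncomputable def hatFunction (u : ℝ) : ℝ := max 0 (1 - |u|)

/-- The indicator of the unit cube of `ℝ^ι × ℝ` along the fibre `{(x - t·1, t) | t ∈ ℝ}` over `x`.
The box spline at `x` is its integral over `t`. -/
noncomputable def cubeFiber {ι : Type*} [Fintype ι] (x : ι → ℝ) (t : ℝ) : ℝ :=
  unitBox t * ∏ i, unitBox (x i - t)

/-- On `[-1, 1]`, the piecewise linear interpolant of `n ↦ z ^ n`; only the three nodes that matter
there are kept. -/
noncomputable def geomInterpolant (z : ℂ) (u : ℝ) : ℂ :=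
  ∑ k ∈ Finset.Icc (-1 : ℤ) 1, hatFunction (u - k) * z ^ k

section Pieces

lemma unitStep_sub_eq_indicator (m : ℝ) : (fun t ↦ unitStep (m - t)) = (Iic m).indicator 1 := by
  ext t
  simp [unitStep, indicator]

lemma unitStep_iInf_sub {ι : Type*} [Fintype ι] [Nonempty ι] (y : ι → ℝ) (t : ℝ) :
    unitStep ((⨅ i, y i) - t) = ∏ i, unitStep (y i - t) := by
  have h_nonneg_iff : 0 ≤ (⨅ i, y i) - t ↔ ∀ i, 0 ≤ y i - t := by
    simpa only [sub_nonneg] using le_ciInf_iff (finite_range y).bddBelow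
  simp [unitStep, indicator, Finset.prod_ite_zero, h_nonneg_iff]

lemma integral_unitStep_sub (m : ℝ) :
    ∫ t in Ioc (0 : ℝ) 1, unitStep (m - t) = max 0 m - max 0 (m - 1) := by
  rw [unitStep_sub_eq_indicator, integral_indicator_one measurableSet_Iic,
    measureReal_restrict_apply measurableSet_Iic, inter_comm, Ioc_inter_Iic, Real.volume_real_Ioc]
  grind

lemma integrableOn_unitStep_sub (m : ℝ) :
    IntegrableOn (fun t ↦ unitStep (m - t)) (Ioc 0 1) := by
  rw [unitStep_sub_eq_indicator]
  exact (integrable_const (1 : ℝ)).indicator measurableSet_Iic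

lemma unitBox_eq_sum_unitStep (u : ℝ) :
    unitBox u = ∑ e : Fin 2, (-1) ^ (e : ℕ) * unitStep (u - (e : ℕ)) := by
  have h_sub : unitBox u = unitStep u - unitStep (u - 1) := by
    simp only [unitBox, unitStep, indicator, mem_Ico, mem_Ici, Pi.one_apply]
    grind
  simp [h_sub, sub_eq_add_neg]

lemma norm_unitBox_le_one (u : ℝ) : ‖unitBox u‖ ≤ 1 :=
  (norm_indicator_le_norm_self _ _).trans (by simp)

@[fun_prop]
lemma measurable_unitBox : Measurable unitBox :=
  measurable_one.indicator measurableSet_Ico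

lemma integrable_unitBox : Integrable unitBox :=
  (integrable_indicator_iff measurableSet_Ico).2 (integrableOn_const (by simp))

lemma integral_unitBox_sub_mul_unitBox_sub (a b : ℝ) :
    ∫ x, unitBox (x - a) * unitBox (x - b) = hatFunction (a - b) := by
  have h_inter : (fun x ↦ unitBox (x - a) * unitBox (x - b)) =
      (Ico (max a b) (min (a + 1) (b + 1))).indicator 1 := by
    ext x
    simp only [unitBox, indicator, mem_Ico, Pi.one_apply]
    grind
  rw [h_inter, integral_indicator_one measurableSet_Ico, Real.volume_real_Ico, hatFunction]
  grind

@[fun_prop]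
lemma continuous_hatFunction : Continuous hatFunction := by
  unfold hatFunction
  fun_prop

lemma hatFunction_neg (u : ℝ) : hatFunction (-u) = hatFunction u := by
  simp only [hatFunction, abs_neg]

lemma hatFunction_of_one_le_abs {u : ℝ} (hu : 1 ≤ |u|) : hatFunction u = 0 :=
  max_eq_left (by linarith)

lemma hatFunction_of_mem_Icc {u : ℝ} (hu : u ∈ Icc (0 : ℝ) 1) : hatFunction u = 1 - u := by
  rw [hatFunction, abs_of_nonneg hu.1, max_eq_right (by linarith [hu.2])]

lemma norm_hatFunction_le_one (u : ℝ) : ‖hatFunction u‖ ≤ 1 := by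
  rw [hatFunction, Real.norm_of_nonneg (le_max_left _ _)]
  exact max_le zero_le_one (by linarith [abs_nonneg u])

lemma hatFunction_mul_hatFunction_sub_intCast {k : ℤ} (hk : k ∉ Finset.Icc (-1) 1) (u : ℝ) :
    hatFunction u * hatFunction (u - k) = 0 := by
  by_contra h_ne
  have hu : |u| < 1 := by
    by_contra! hu
    simp [hatFunction_of_one_le_abs hu] at h_ne
  have huk : |u - k| < 1 := by
    by_contra! huk
    simp [hatFunction_of_one_le_abs huk] at h_ne
  rw [abs_lt] at hu huk
  have hk_gt : (-2 : ℝ) < k := by linarith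
  have hk_lt : (k : ℝ) < 2 := by linarith
  norm_cast at hk_gt hk_lt
  exact hk (Finset.mem_Icc.2 ⟨by lia, by lia⟩)

lemma integrable_hatFunction_smul {E : Type*} [NormedAddCommGroup E] [NormedSpace ℝ E] {f : ℝ → E}
    (hf : Continuous f) : Integrable fun u ↦ hatFunction u • f u :=
  (by fun_prop : Continuous fun u ↦ hatFunction u • f u).integrable_of_hasCompactSupport <|
    .intro (isCompact_Icc (a := -1) (b := 1)) fun u hu ↦ by
      rw [hatFunction_of_one_le_abs (by grind), zero_smul]

lemma integral_hatFunction_smul {E : Type*} [NormedAddCommGroup E] [NormedSpace ℝ E] {f : ℝ → E}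
    (hf : Continuous f) :
    ∫ u, hatFunction u • f u = ∫ u in (0 : ℝ)..1, (1 - u) • (f u + f (-u)) := by
  have h_support : support (fun u ↦ hatFunction u • f u) ⊆ Ioc (-1) 1 := fun u hu ↦ by
    by_contra hu_out
    exact hu (by simp [hatFunction_of_one_le_abs (u := u) (by grind)])
  have h_intervalIntegrable (a b : ℝ) :
      IntervalIntegrable (fun u ↦ hatFunction u • f u) volume a b :=
    (by fun_prop : Continuous fun u ↦ hatFunction u • f u).intervalIntegrable a b
  have h_left : ∫ u in (-1 : ℝ)..0, hatFunction u • f u =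
      ∫ u in (0 : ℝ)..1, hatFunction u • f (-u) := by
    simpa [hatFunction_neg] using
      (intervalIntegral.integral_comp_neg (a := 0) (b := 1) fun u ↦ hatFunction u • f u).symm
  rw [← intervalIntegral.integral_eq_integral_of_support_subset h_support,
    ← intervalIntegral.integral_add_adjacent_intervals (h_intervalIntegrable _ 0)
      (h_intervalIntegrable _ _), h_left, add_comm, ← intervalIntegral.integral_add
      (h_intervalIntegrable _ _)
      ((by fun_prop : Continuous fun u ↦ hatFunction u • f (-u)).intervalIntegrable _ _)]
  refine intervalIntegral.integral_congr fun u hu ↦ ?_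
  rw [uIcc_of_le zero_le_one] at hu
  simp only [hatFunction_of_mem_Icc hu, smul_add]

end Pieces

section CubeFiber

variable {ι : Type*} [Fintype ι]

lemma norm_cubeFiber_le_one (x : ι → ℝ) (t : ℝ) : ‖cubeFiber x t‖ ≤ 1 := by
  rw [cubeFiber, norm_mul, norm_prod]
  exact mul_le_one₀ (norm_unitBox_le_one _) (by positivity)
    (Finset.prod_le_one (fun _ _ ↦ norm_nonneg _) fun _ _ ↦ norm_unitBox_le_one _)

@[fun_prop]
lemma measurable_cubeFiber {α : Type*} [MeasurableSpace α] {x : α → ι → ℝ} {t : α → ℝ}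
    (hx : Measurable x) (ht : Measurable t) : Measurable fun a ↦ cubeFiber (x a) (t a) := by
  unfold cubeFiber
  fun_prop

lemma mem_Icc_of_cubeFiber_ne_zero {x : ι → ℝ} {t : ℝ} (h : cubeFiber x t ≠ 0) :
    x ∈ Icc 0 2 ∧ t ∈ Icc 0 1 := by
  obtain ⟨ht, hx⟩ := mul_ne_zero_iff.1 h
  have ht : t ∈ Ico 0 1 := mem_of_indicator_ne_zero ht
  have hx (i : ι) : x i - t ∈ Ico 0 1 :=
    mem_of_indicator_ne_zero (Finset.prod_ne_zero_iff.1 hx i (Finset.mem_univ i))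
  refine ⟨⟨fun i ↦ ?_, fun i ↦ ?_⟩, Ico_subset_Icc_self ht⟩
  · simpa using (by linarith [(hx i).1, ht.1] : 0 ≤ x i)
  · simpa using (by linarith [(hx i).2, ht.2] : x i ≤ 2)

lemma integrable_cubeFiber_mul_cubeFiber_sub (y : ι → ℝ) :
    Integrable (fun q : (ι → ℝ) × ℝ × ℝ ↦ cubeFiber q.1 q.2.1 * cubeFiber (q.1 - y) q.2.2)
      (volume.prod (volume.prod volume)) := by
  have h_measurable : Measurable fun q : (ι → ℝ) × ℝ × ℝ ↦
      cubeFiber q.1 q.2.1 * cubeFiber (q.1 - y) q.2.2 := by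
    fun_prop
  have h_support : support (fun q : (ι → ℝ) × ℝ × ℝ ↦
      cubeFiber q.1 q.2.1 * cubeFiber (q.1 - y) q.2.2) ⊆ Icc 0 2 ×ˢ Icc 0 1 ×ˢ Icc 0 1 :=
    fun q hq ↦
      have ⟨hx, ht⟩ := mem_Icc_of_cubeFiber_ne_zero (left_ne_zero_of_mul hq)
      ⟨hx, ht, (mem_Icc_of_cubeFiber_ne_zero (right_ne_zero_of_mul hq)).2⟩
  refine (integrableOn_iff_integrable_of_support_subset h_support).1 <|
    Measure.integrableOn_of_bounded (M := 1)
      (isCompact_Icc.prod (isCompact_Icc.prod isCompact_Icc)).measure_ne_top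
      h_measurable.aestronglyMeasurable (.of_forall fun q ↦ ?_)
  rw [norm_mul]
  exact mul_le_one₀ (norm_cubeFiber_le_one _ _) (norm_nonneg _) (norm_cubeFiber_le_one _ _)

lemma integral_cubeFiber_mul_cubeFiber_sub (y : ι → ℝ) (t s : ℝ) :
    ∫ x, cubeFiber x t * cubeFiber (x - y) s =
      unitBox t * unitBox s * ∏ i, hatFunction (t - s - y i) := by
  have h_factor (x : ι → ℝ) : cubeFiber x t * cubeFiber (x - y) s =
      unitBox t * unitBox s * ∏ i, unitBox (x i - t) * unitBox (x i - (y i + s)) := by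
    simp only [cubeFiber, Pi.sub_apply, Finset.prod_mul_distrib, sub_sub]
    ring
  simp_rw [h_factor, integral_const_mul]
  rw [integral_fintype_prod_volume_eq_prod fun i x ↦ unitBox (x - t) * unitBox (x - (y i + s))]
  simp_rw [integral_unitBox_sub_mul_unitBox_sub, sub_add_eq_sub_sub_swap]

end CubeFiber

lemma integral_prod_mul_comp_sub {G : Type*} [AddGroup G] [MeasurableSpace G] [MeasurableAdd₂ G]
    [MeasurableNeg G] {μ : Measure G} [SFinite μ] [μ.IsAddRightInvariant] {𝕜 : Type*} [RCLike 𝕜]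
    {f g φ : G → 𝕜} {C : ℝ}
    (hf : Integrable f μ) (hg : Integrable g μ) (hφ : Measurable φ) (hφ_le : ∀ u, ‖φ u‖ ≤ C) :
    ∫ p : G × G, f p.1 * g p.2 * φ (p.1 - p.2) ∂μ.prod μ =
      ∫ u, (∫ s, f (u + s) * g s ∂μ) * φ u ∂μ := by
  have h_integrable : Integrable (fun p : G × G ↦ f p.1 * g p.2 * φ (p.1 - p.2)) (μ.prod μ) :=
    (hf.mul_prod hg).mul_bdd (c := C) (hφ.comp measurable_sub).aestronglyMeasurable
      (.of_forall fun _ ↦ hφ_le _)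
  have h_shear := measurePreserving_add_prod μ μ
  rw [← h_shear.map_eq] at h_integrable
  calc ∫ p : G × G, f p.1 * g p.2 * φ (p.1 - p.2) ∂μ.prod μ
      = ∫ p : G × G, f (p.1 + p.2) * g p.2 * φ (p.1 + p.2 - p.2) ∂μ.prod μ := by
        conv_lhs => rw [← h_shear.map_eq]
        exact integral_map h_shear.aemeasurable h_integrable.1
    _ = ∫ u, ∫ s, f (u + s) * g s * φ (u + s - s) ∂μ ∂μ :=
        integral_prod _ (h_integrable.comp_measurable h_shear.measurable)
    _ = ∫ u, (∫ s, f (u + s) * g s ∂μ) * φ u ∂μ := by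
        simp_rw [add_sub_cancel_right, integral_mul_const]

section BoxSpline

variable {d : ℕ}

lemma boxSplineD_eq_sum_max_sub_max [NeZero d] (x : Fin d → ℝ) :
    boxSplineD d x = ∑ ε : Fin d → Fin 2, (-1 : ℝ) ^ (∑ i, (ε i : ℕ)) *
      (max 0 (⨅ i, (x i - (ε i : ℕ))) - max 0 ((⨅ i, (x i - (ε i : ℕ))) - 1)) := by
  have h_iInf (ε : Fin d → Fin 2) :
      ⨅ i, (x i - (ε i : ℕ) - 1) = (⨅ i, (x i - (ε i : ℕ))) - 1 :=
    (ciInf_sub (finite_range _).bddBelow 1).symm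
  rw [boxSplineD, ← (Fin.snocEquiv fun _ ↦ Fin 2).sum_comp, Fintype.sum_prod_type,
    Fin.sum_univ_two, ← Finset.sum_add_distrib]
  refine Finset.sum_congr rfl fun ε _ ↦ ?_
  simp only [Fin.snocEquiv, Equiv.coe_fn_mk, Fin.sum_univ_castSucc, Fin.snoc_castSucc,
    Fin.snoc_last, Fin.val_zero, Fin.val_one, Nat.cast_zero, Nat.cast_one, sub_zero, h_iInf]
  ring

lemma prod_unitBox_sub_eq_sum [NeZero d] (x : Fin d → ℝ) (t : ℝ) :
    ∏ i, unitBox (x i - t) = ∑ ε : Fin d → Fin 2, (-1 : ℝ) ^ (∑ i, (ε i : ℕ)) *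
      unitStep ((⨅ i, (x i - (ε i : ℕ))) - t) := by
  simp_rw [unitBox_eq_sum_unitStep, Finset.prod_univ_sum, Fintype.piFinset_univ,
    Finset.prod_mul_distrib, Finset.prod_pow_eq_pow_sum, unitStep_iInf_sub, sub_right_comm]

theorem boxSplineD_eq_integral_cubeFiber [NeZero d] (x : Fin d → ℝ) :
    boxSplineD d x = ∫ t, cubeFiber x t := by
  have h_indicator (t : ℝ) : cubeFiber x t =
      (Ico 0 1).indicator (fun t ↦ ∏ i, unitBox (x i - t)) t := by
    simp [cubeFiber, unitBox, indicator]
  simp_rw [h_indicator, integral_indicator measurableSet_Ico, integral_Ico_eq_integral_Ioc,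
    prod_unitBox_sub_eq_sum]
  rw [integral_finsetSum _ fun ε _ ↦ (integrableOn_unitStep_sub _).const_mul _]
  simp_rw [integral_const_mul, integral_unitStep_sub, boxSplineD_eq_sum_max_sub_max]

theorem integral_boxSplineD_mul_boxSplineD_sub [NeZero d] (y : Fin d → ℝ) :
    ∫ x : Fin d → ℝ, boxSplineD d x * boxSplineD d (fun i ↦ x i - y i) =
      ∫ u, hatFunction u * ∏ i, hatFunction (u - y i) := by
  have h_norm_le (u : ℝ) : ‖∏ i, hatFunction (u - y i)‖ ≤ 1 := by
    rw [norm_prod]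
    exact Finset.prod_le_one (fun _ _ ↦ norm_nonneg _) fun _ _ ↦ norm_hatFunction_le_one _
  calc ∫ x : Fin d → ℝ, boxSplineD d x * boxSplineD d (x - y)
      = ∫ x : Fin d → ℝ, ∫ p : ℝ × ℝ, cubeFiber x p.1 * cubeFiber (x - y) p.2 := by
        simp_rw [boxSplineD_eq_integral_cubeFiber, ← integral_prod_mul, Measure.volume_eq_prod]
    _ = ∫ p : ℝ × ℝ, ∫ x : Fin d → ℝ, cubeFiber x p.1 * cubeFiber (x - y) p.2 :=
        integral_integral_swap (integrable_cubeFiber_mul_cubeFiber_sub y)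
    _ = ∫ p : ℝ × ℝ, unitBox p.1 * unitBox p.2 * ∏ i, hatFunction (p.1 - p.2 - y i) := by
        simp_rw [integral_cubeFiber_mul_cubeFiber_sub]
    _ = ∫ u, (∫ s, unitBox (u + s) * unitBox s) * ∏ i, hatFunction (u - y i) :=
        integral_prod_mul_comp_sub integrable_unitBox integrable_unitBox
          (φ := fun u ↦ ∏ i, hatFunction (u - y i)) (by fun_prop) h_norm_le
    _ = ∫ u, hatFunction u * ∏ i, hatFunction (u - y i) := by
        congr! 3 with u
        simpa [add_comm u, hatFunction_neg] using integral_unitBox_sub_mul_unitBox_sub (-u) 0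

end BoxSpline

section Transform

lemma exp_two_pi_mul_I_mul_intCast_div (m : ℤ) (c : ℂ) :
    Complex.exp (2 * Real.pi * Complex.I * m / c) =
      Complex.exp (2 * Real.pi * Complex.I / c) ^ m := by
  rw [← Complex.exp_int_mul]
  ring_nf

lemma zpow_sum_eq_prod {ι G₀ : Type*} [CommGroupWithZero G₀] {z : G₀} (hz : z ≠ 0) (s : Finset ι)
    (k : ι → ℤ) : z ^ (∑ i ∈ s, k i) = ∏ i ∈ s, z ^ k i := by
  induction s using Finset.cons_induction with
  | empty => simp
  | cons i s hi ih => rw [Finset.sum_cons, Finset.prod_cons, zpow_add₀ hz, ih]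

@[fun_prop]
lemma continuous_geomInterpolant (z : ℂ) : Continuous (geomInterpolant z) := by
  unfold geomInterpolant
  fun_prop

lemma geomInterpolant_neg (z : ℂ) (u : ℝ) : geomInterpolant z (-u) = geomInterpolant z⁻¹ u := by
  refine Finset.sum_nbij' (fun k ↦ -k) (fun k ↦ -k) (by grind) (by grind) (by simp) (by simp)
    fun k _ ↦ ?_
  rw [inv_zpow', neg_neg, ← hatFunction_neg]
  push_cast
  ring_nf

lemma geomInterpolant_of_mem_Icc (z : ℂ) {u : ℝ} (hu : u ∈ Icc (0 : ℝ) 1) :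
    geomInterpolant z u = 1 - u * (1 - z) := by
  have h_nodes : Finset.Icc (-1 : ℤ) 1 = {-1, 0, 1} := rfl
  have h_sum : geomInterpolant z u =
      hatFunction (u + 1) * z⁻¹ + hatFunction u + hatFunction (u - 1) * z := by
    simp [geomInterpolant, h_nodes, add_assoc]
  have h_left : hatFunction (u + 1) = 0 := hatFunction_of_one_le_abs (by grind)
  have h_right : hatFunction (u - 1) = u := by
    rw [← hatFunction_neg, hatFunction_of_mem_Icc ⟨by linarith [hu.2], by linarith [hu.1]⟩]
    ring
  rw [h_sum, h_left, hatFunction_of_mem_Icc hu, h_right]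
  push_cast
  ring

variable {ι : Type*} [Fintype ι]

lemma hatFunction_mul_prod_hatFunction_sub_intCast [DecidableEq ι] {k : ι → ℤ}
    (hk : k ∉ Fintype.piFinset fun _ ↦ Finset.Icc (-1) 1) (u : ℝ) :
    hatFunction u * ∏ i, hatFunction (u - k i) = 0 := by
  simp only [Fintype.mem_piFinset, not_forall] at hk
  obtain ⟨i, hi⟩ := hk
  rw [← Finset.mul_prod_erase _ _ (Finset.mem_univ i), ← mul_assoc,
    hatFunction_mul_hatFunction_sub_intCast hi, zero_mul]

lemma support_integral_hatFunction_mul_prod_subset [DecidableEq ι] :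
    support (fun k : ι → ℤ ↦ ∫ u, hatFunction u * ∏ i, hatFunction (u - k i)) ⊆
      (Fintype.piFinset fun _ ↦ Finset.Icc (-1) 1 : Finset (ι → ℤ)) := by
  refine support_subset_iff'.2 fun k hk ↦ ?_
  simp_rw [hatFunction_mul_prod_hatFunction_sub_intCast hk, integral_zero]

theorem finsum_integral_hatFunction_mul_zpow {z : ℂ} (hz : z ≠ 0) :
    ∑ᶠ k : ι → ℤ, ((∫ u, hatFunction u * ∏ i, hatFunction (u - k i) : ℝ) : ℂ) * z ^ (∑ i, k i) =
      ∫ u, hatFunction u • geomInterpolant z u ^ Fintype.card ι := by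
  classical
  have h_expand (u : ℝ) : hatFunction u • geomInterpolant z u ^ Fintype.card ι =
      ∑ k ∈ Fintype.piFinset fun _ : ι ↦ Finset.Icc (-1 : ℤ) 1,
        hatFunction u • (∏ i, (hatFunction (u - k i) : ℂ)) * z ^ (∑ i, k i) := by
    rw [← Finset.card_univ, ← Finset.prod_const]
    simp_rw [geomInterpolant, Finset.prod_univ_sum, Finset.smul_sum, zpow_sum_eq_prod hz,
      Finset.prod_mul_distrib, smul_mul_assoc]
  simp_rw [h_expand]
  rw [integral_finsetSum _ fun k _ ↦
      (integrable_hatFunction_smul (by fun_prop)).mul_const _,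
    finsum_eq_sum_of_support_subset _ ((support_mul_subset_left _ _).trans fun k hk ↦
      support_integral_hatFunction_mul_prod_subset (by simpa using hk))]
  simp [integral_mul_const, ← integral_complex_ofReal]

end Transform

section RootOfUnity

lemma integral_one_sub_mul_one_sub_mul_pow {w : ℂ} (hw : w ≠ 0) (n : ℕ) :
    ∫ u : ℝ in 0..1, (1 - u : ℂ) * (1 - u * w) ^ n =
      1 / (w * (n + 1)) - (1 - (1 - w) ^ (n + 2)) / (w ^ 2 * (n + 1) * (n + 2)) := by
  have hn₁ : (n : ℂ) + 1 ≠ 0 := by exact_mod_cast n.succ_ne_zero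
  have hn₂ : (n : ℂ) + 2 ≠ 0 := by exact_mod_cast (n + 1).succ_ne_zero
  have h_deriv (u : ℝ) : HasDerivAt (fun u : ℝ ↦
      -((1 - u : ℂ) * (1 - u * w) ^ (n + 1)) / (w * (n + 1)) +
        (1 - u * w) ^ (n + 2) / (w ^ 2 * (n + 1) * (n + 2)))
      ((1 - u : ℂ) * (1 - u * w) ^ n) u := by
    have h_id : HasDerivAt (fun u : ℝ ↦ (u : ℂ)) 1 u := Complex.ofRealCLM.hasDerivAt
    have h_linear := (h_id.mul_const w).const_sub 1
    convert! ((((h_id.const_sub 1).mul (h_linear.pow (n + 1))).neg.div_const (w * (n + 1))).add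
      ((h_linear.pow (n + 2)).div_const (w ^ 2 * (n + 1) * (n + 2)))) using 1
    simp only [Pi.pow_apply]
    push_cast
    field_simp
    ring
  rw [intervalIntegral.integral_eq_sub_of_hasDerivAt (fun u _ ↦ h_deriv u)
    ((by fun_prop : Continuous fun u : ℝ ↦ (1 - u : ℂ) * (1 - u * w) ^ n).intervalIntegrable _ _)]
  simp only [Complex.ofReal_zero, Complex.ofReal_one, sub_self, sub_zero, zero_mul, one_mul,
    one_pow]
  field_simp
  ring

lemma integral_one_sub_mul_pow_of_pow_eq_one {n : ℕ} {z : ℂ} (hz : z ^ (n + 1) = 1) (hz₁ : z ≠ 1) :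
    ∫ u : ℝ in 0..1, (1 - u : ℂ) * (1 - u * (1 - z)) ^ n = 1 / ((1 - z) * (n + 2)) := by
  have hw : 1 - z ≠ 0 := sub_ne_zero.2 hz₁.symm
  have hn₁ : (n : ℂ) + 1 ≠ 0 := by exact_mod_cast n.succ_ne_zero
  have hn₂ : (n : ℂ) + 2 ≠ 0 := by exact_mod_cast (n + 1).succ_ne_zero
  rw [integral_one_sub_mul_one_sub_mul_pow hw, sub_sub_cancel, pow_succ, hz, one_mul]
  field_simp
  ring

theorem integral_hatFunction_smul_geomInterpolant_pow {n : ℕ} {z : ℂ} (hz : z ^ (n + 1) = 1)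
    (hz₁ : z ≠ 1) :
    ∫ u, hatFunction u • geomInterpolant z u ^ n = 1 / ((n : ℂ) + 2) := by
  have hz₀ : z ≠ 0 := by rintro rfl; simp at hz
  have hw : 1 - z ≠ 0 := sub_ne_zero.2 hz₁.symm
  have hn : (n : ℂ) + 2 ≠ 0 := by exact_mod_cast (n + 1).succ_ne_zero
  have h_intervalIntegrable (w : ℂ) :
      IntervalIntegrable (fun u : ℝ ↦ (1 - u : ℂ) * (1 - u * w) ^ n) volume 0 1 :=
    (by fun_prop : Continuous fun u : ℝ ↦ (1 - u : ℂ) * (1 - u * w) ^ n).intervalIntegrable _ _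
  calc ∫ u, hatFunction u • geomInterpolant z u ^ n
      = ∫ u : ℝ in 0..1, (1 - u) • (geomInterpolant z u ^ n + geomInterpolant z (-u) ^ n) :=
        integral_hatFunction_smul (by fun_prop)
    _ = ∫ u : ℝ in 0..1,
          ((1 - u : ℂ) * (1 - u * (1 - z)) ^ n + (1 - u : ℂ) * (1 - u * (1 - z⁻¹)) ^ n) := by
        refine intervalIntegral.integral_congr fun u hu ↦ ?_
        rw [uIcc_of_le zero_le_one] at hu
        simp [geomInterpolant_neg, geomInterpolant_of_mem_Icc _ hu]
    _ = 1 / ((1 - z) * (n + 2)) + 1 / ((1 - z⁻¹) * (n + 2)) := by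
        rw [intervalIntegral.integral_add (h_intervalIntegrable _) (h_intervalIntegrable _),
          integral_one_sub_mul_pow_of_pow_eq_one hz hz₁,
          integral_one_sub_mul_pow_of_pow_eq_one (by rw [inv_pow, hz, inv_one])
            (inv_ne_one.2 hz₁)]
    _ = 1 / ((n : ℂ) + 2) := by
        have h_inv : 1 - z⁻¹ = -(1 - z) / z := by
          field_simp
          ring
        rw [h_inv]
        field_simp
        ring

end RootOfUnity

theorem boxSpline_autocorrelation_dtft_value_general {d : ℕ} {z : ℂ} (hz : z ^ (d + 1) = 1)
    (hz₁ : z ≠ 1) :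
    {k : Fin d → ℤ |
        (∫ x : Fin d → ℝ, boxSplineD d x * boxSplineD d (fun i ↦ x i - (k i : ℝ))) ≠ 0}.Finite ∧
    ∑ᶠ k : Fin d → ℤ,
        ((∫ x : Fin d → ℝ, boxSplineD d x * boxSplineD d (fun i ↦ x i - (k i : ℝ)) : ℝ) : ℂ) *
          z ^ (∑ i, k i) =
      1 / ((d : ℂ) + 2) := by
  have : NeZero d := ⟨by rintro rfl; exact hz₁ (by simpa using hz)⟩
  have hz₀ : z ≠ 0 := by rintro rfl; simp at hz
  simp_rw [integral_boxSplineD_mul_boxSplineD_sub]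
  refine ⟨(Finset.finite_toSet _).subset support_integral_hatFunction_mul_prod_subset, ?_⟩
  rw [finsum_integral_hatFunction_mul_zpow hz₀, Fintype.card_fin,
    integral_hatFunction_smul_geomInterpolant_pow hz hz₁]

/-- the discrete-time Fourier transform of the sampled autocorrelation of the
Cartesian linear box spline, evaluated at `ω₀ = −(2π/(d+1))·(1,…,1)`, equals `1/(d+2)`:
`Σ_{k ∈ ℤ^d} (∫ D(x) D(x−k) dx) e^{2πi|k|/(d+1)} = 1/(d+2)`, the sum having finitely many
nonzero terms. -/
theorem boxSpline_autocorrelation_dtft_value (d : ℕ) (hd : 1 ≤ d) :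
    {k : Fin d → ℤ |
        (∫ x : Fin d → ℝ, boxSplineD d x * boxSplineD d (fun i => x i - (k i : ℝ))) ≠ 0}.Finite ∧
    ∑ᶠ k : Fin d → ℤ,
        ((∫ x : Fin d → ℝ, boxSplineD d x * boxSplineD d (fun i => x i - (k i : ℝ)) : ℝ) : ℂ) *
          Complex.exp (2 * Real.pi * Complex.I * ((∑ i, k i : ℤ) : ℂ) / ((d : ℂ) + 1)) =
      1 / ((d : ℂ) + 2) := by
  have h_root : IsPrimitiveRoot (Complex.exp (2 * Real.pi * Complex.I / ((d : ℂ) + 1))) (d + 1) :=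
    mod_cast Complex.isPrimitiveRoot_exp (d + 1) d.succ_ne_zero
  simp_rw [exp_two_pi_mul_I_mul_intCast_div]
  exact boxSpline_autocorrelation_dtft_value_general h_root.pow_eq_one (h_root.ne_one (by lia))
end
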